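/- Let p ∈ (0,1/2], r ∈ ℕ with r ≥ 1, and δ > 0. Suppose f : {0,1}^n → {0,1} is (r,δ)-global and μ_p(f) ≤ δ. Then for all S ⊆ [n] with |S| ≤ r one has I_S(f^{≤r}) ≤ I_S(f) ≤ 8^r·δ. -/

import Mathlib

open Finset

namespace GlobalHC

variable {n : ℕ}

/-- Expectation with respect to the `p`-biased measure on `{0,1}^n`. -/
noncomputable def Ep (p : ℝ) (f : (Fin n → Bool) → ℝ) : ℝ :=
  ∑ x : Fin n → Bool, (∏ i, if x i then p else 1 - p) * f x

/-- The `r`-norm with respect to the `p`-biased measure. -/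
noncomputable def pnorm (p r : ℝ) (f : (Fin n → Bool) → ℝ) : ℝ :=
  (Ep p fun x => |f x| ^ r) ^ (1 / r)

/-- The `p`-biased character `χ_S`. -/
noncomputable def chi (p : ℝ) (S : Finset (Fin n)) (x : Fin n → Bool) : ℝ :=
  ∏ i ∈ S, ((if x i then (1 : ℝ) else 0) - p) / Real.sqrt (p * (1 - p))

/-- The `p`-biased Fourier coefficient `f̂(S)`. -/
noncomputable def coeff (p : ℝ) (f : (Fin n → Bool) → ℝ) (S : Finset (Fin n)) : ℝ :=
  Ep p fun x => f x * chi p S x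

/-- The derivative `D_S f = Σ_{T ⊇ S} f̂(T) χ_{T∖S}`. -/
noncomputable def derivS (p : ℝ) (S : Finset (Fin n)) (f : (Fin n → Bool) → ℝ) :
    (Fin n → Bool) → ℝ :=
  fun x => ∑ T ∈ Finset.univ.filter (fun T => S ⊆ T), coeff p f T * chi p (T \ S) x

/-- The generalised influence `I_S(f) = σ^{-2|S|} Σ_{T ⊇ S} f̂(T)²`. -/
noncomputable def genInf (p : ℝ) (S : Finset (Fin n)) (f : (Fin n → Bool) → ℝ) : ℝ :=
  (∑ T ∈ Finset.univ.filter (fun T => S ⊆ T), coeff p f T ^ 2) / (p * (1 - p)) ^ S.card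

/-- The noise operator `T_ρ f = Σ_S ρ^{|S|} f̂(S) χ_S`. -/
noncomputable def noise (p ρ : ℝ) (f : (Fin n → Bool) → ℝ) : (Fin n → Bool) → ℝ :=
  fun x => ∑ S : Finset (Fin n), ρ ^ S.card * coeff p f S * chi p S x

/-- The degree-`r` truncation `f^{≤ r}`. -/
noncomputable def trunc (p : ℝ) (r : ℕ) (f : (Fin n → Bool) → ℝ) : (Fin n → Bool) → ℝ :=
  fun x => ∑ S ∈ Finset.univ.filter (fun S : Finset (Fin n) => S.card ≤ r),
    coeff p f S * chi p S x

/-- The restriction `f_{J→1}` setting all coordinates in `J` to `1`. -/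
def restrict1 (J : Finset (Fin n)) (f : (Fin n → Bool) → ℝ) : (Fin n → Bool) → ℝ :=
  fun x => f (fun i => if i ∈ J then true else x i)

/-- `f` is `(r,δ)`-global (for the `p`-biased measure). -/
def IsGlobal (p r δ : ℝ) (f : (Fin n → Bool) → ℝ) : Prop :=
  ∀ J : Finset (Fin n), (J.card : ℝ) ≤ r → Ep p (restrict1 J f) ≤ Ep p f + δ

/-- The total influence `I[f] = Σ_i Pr_{μ_p}[f(x ⊕ e_i) ≠ f(x)]`. -/
noncomputable def totalInf (p : ℝ) (f : (Fin n → Bool) → ℝ) : ℝ :=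
  ∑ i : Fin n, Ep p fun x => if f (Function.update x i (!x i)) = f x then 0 else 1

/-- Noise stability `Stab_ρ(f) = Σ_S ρ^{|S|} f̂(S)²` (w.r.t. `μ_p`). -/
noncomputable def stab (p ρ : ℝ) (f : (Fin n → Bool) → ℝ) : ℝ :=
  ∑ S : Finset (Fin n), ρ ^ S.card * coeff p f S ^ 2

/-- `f` is monotone. -/
def Mono (f : (Fin n → Bool) → ℝ) : Prop :=
  ∀ x y : Fin n → Bool, (∀ i, x i ≤ y i) → f x ≤ f y


/-! ### Helper lemmas -/

lemma Ep_add (p : ℝ) (f g : (Fin n → Bool) → ℝ) :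
    Ep p (fun x => f x + g x) = Ep p f + Ep p g := by
  simp [Ep, mul_add, Finset.sum_add_distrib]

lemma Ep_smul (p c : ℝ) (f : (Fin n → Bool) → ℝ) :
    Ep p (fun x => c * f x) = c * Ep p f := by
  simp only [Ep, Finset.mul_sum]
  exact Finset.sum_congr rfl fun x _ => by ring

lemma Ep_sum {ι : Type*} (p : ℝ) (A : Finset ι) (F : ι → (Fin n → Bool) → ℝ) :
    Ep p (fun x => ∑ a ∈ A, F a x) = ∑ a ∈ A, Ep p (F a) := by
  simp only [Ep, Finset.mul_sum]
  exact Finset.sum_comm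

lemma Ep_mono {p : ℝ} (hp : 0 < p) (hp' : p ≤ 1/2) {f g : (Fin n → Bool) → ℝ}
    (h : ∀ x, f x ≤ g x) : Ep p f ≤ Ep p g := by
  refine Finset.sum_le_sum fun x _ => mul_le_mul_of_nonneg_left (h x) ?_
  refine Finset.prod_nonneg fun i _ => ?_
  split_ifs <;> linarith

lemma Ep_split (p : ℝ) (i : Fin n) (h : (Fin n → Bool) → ℝ) :
    Ep p h = Ep p (fun x => p * h (Function.update x i true)
      + (1 - p) * h (Function.update x i false)) := by
  classical
  have key : ∀ F : (Fin n → Bool) → ℝ,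
      2 * ∑ x, F x = ∑ x, (F (Function.update x i (x i)) + F (Function.update x i (!x i))) := by
    intro F
    have hinv : Function.Involutive (fun x : Fin n → Bool => Function.update x i (!x i)) := by
      intro x
      simp
    have := Equiv.sum_comp hinv.toPerm F
    simp only [Function.Involutive.coe_toPerm] at this
    rw [Finset.sum_add_distrib, this]
    simp only [Function.update_eq_self]
    ring
  have hw : ∀ (x : Fin n → Bool) (b : Bool),
      (∏ j, if Function.update x i b j then p else 1 - p)
        = (if b then p else 1 - p) * ∏ j ∈ univ.erase i, (if x j then p else 1 - p) := by
    intro x b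
    rw [← Finset.mul_prod_erase univ _ (Finset.mem_univ i)]
    congr 1
    · simp
    · refine Finset.prod_congr rfl fun j hj => ?_
      rw [Function.update_of_ne (Finset.ne_of_mem_erase hj)]
  have : 2 * Ep p h = 2 * Ep p (fun x => p * h (Function.update x i true)
      + (1 - p) * h (Function.update x i false)) := by
    unfold Ep
    rw [key, key]
    refine Finset.sum_congr rfl fun x _ => ?_
    simp only [hw, Function.update_idem]
    cases x i <;> simp <;> ring
  linarith

lemma chi_erase_update (p : ℝ) (T : Finset (Fin n)) (i : Fin n) (x : Fin n → Bool) (b : Bool)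
    (hi : i ∉ T) : chi p T (Function.update x i b) = chi p T x := by
  unfold chi
  refine Finset.prod_congr rfl fun j hj => ?_
  rw [Function.update_of_ne (by rintro rfl; exact hi hj)]

lemma chi_update (p : ℝ) (T : Finset (Fin n)) (i : Fin n) (x : Fin n → Bool) (b : Bool)
    (hi : i ∈ T) : chi p T (Function.update x i b)
      = (((if b then (1 : ℝ) else 0) - p) / Real.sqrt (p * (1 - p))) * chi p (T.erase i) x := by
  rw [← chi_erase_update p (T.erase i) i x b (by simp)]
  unfold chi
  rw [← Finset.mul_prod_erase T _ hi]
  simp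

/-- Unnormalised discrete derivative in direction `i`. -/
def dd (i : Fin n) (f : (Fin n → Bool) → ℝ) : (Fin n → Bool) → ℝ :=
  fun x => f (Function.update x i true) - f (Function.update x i false)

lemma coeff_dd {p : ℝ} (hp : 0 < p) (hp' : p ≤ 1/2) (f : (Fin n → Bool) → ℝ)
    (T : Finset (Fin n)) (i : Fin n) (hi : i ∈ T) :
    coeff p f T = Real.sqrt (p * (1 - p)) * coeff p (dd i f) (T.erase i) := by
  have hpos : 0 < p * (1 - p) := mul_pos hp (by linarith)
  have hs : 0 < Real.sqrt (p * (1 - p)) := Real.sqrt_pos.2 hpos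
  have hsq : Real.sqrt (p * (1 - p)) ^ 2 = p * (1 - p) := Real.sq_sqrt hpos.le
  unfold coeff
  rw [Ep_split p i, ← Ep_smul]
  congr 1
  funext x
  rw [chi_update p T i x true hi, chi_update p T i x false hi, dd]
  generalize chi p (T.erase i) x = c
  generalize f (Function.update x i true) = a
  generalize f (Function.update x i false) = b
  generalize Real.sqrt (p * (1 - p)) = s at *
  simp only [if_true, Bool.false_eq_true, if_false]
  field_simp
  rw [hsq]
  ring

lemma Ep_one (p : ℝ) : Ep p (fun _ : Fin n → Bool => 1) = 1 := by
  classical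
  unfold Ep
  simp only [mul_one]
  have := Finset.prod_univ_sum (R := ℝ) (fun _ : Fin n => (univ : Finset Bool))
    (fun _ b => if b then p else 1 - p)
  rw [Fintype.piFinset_univ] at this
  rw [← this]
  simp

lemma coeff_chi {p : ℝ} (hp : 0 < p) (hp' : p ≤ 1/2) (S T : Finset (Fin n)) :
    coeff p (chi p S) T = if S = T then 1 else 0 := by
  classical
  have hpos : 0 < p * (1 - p) := mul_pos hp (by linarith)
  have hs : 0 < Real.sqrt (p * (1 - p)) := Real.sqrt_pos.2 hpos
  induction T using Finset.induction_on generalizing S with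
  | empty =>
    by_cases hS : S = ∅
    · subst hS
      simp [coeff, chi, Ep_one]
    · rw [if_neg hS]
      obtain ⟨i, hi⟩ := Finset.nonempty_iff_ne_empty.2 hS
      unfold coeff
      rw [Ep_split p i]
      have : ∀ x, p * (chi p S (Function.update x i true) * chi p ∅ (Function.update x i true))
          + (1 - p) * (chi p S (Function.update x i false) * chi p ∅ (Function.update x i false))
            = 0 := by
        intro x
        rw [chi_update p S i x true hi, chi_update p S i x false hi]
        simp [chi]
        field_simp
        ring
      simp [this, Ep]
  | insert i T hiT ih =>
    rw [coeff_dd hp hp' _ _ i (Finset.mem_insert_self i T), Finset.erase_insert hiT]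
    by_cases hi : i ∈ S
    · have h1 : dd i (chi p S)
          = fun x => (Real.sqrt (p * (1 - p)))⁻¹ * chi p (S.erase i) x := by
        funext x
        rw [dd, chi_update p S i x true hi, chi_update p S i x false hi]
        simp
        field_simp
        ring
      have h2 : coeff p (dd i (chi p S)) T
          = (Real.sqrt (p * (1 - p)))⁻¹ * coeff p (chi p (S.erase i)) T := by
        rw [h1]; unfold coeff; rw [← Ep_smul]
        congr 1; funext x; ring
      rw [h2, ih, mul_inv_cancel_left₀ hs.ne']
      have : S.erase i = T ↔ S = insert i T := by
        constructor
        · rintro rfl; exact (Finset.insert_erase hi).symm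
        · rintro rfl; exact Finset.erase_insert hiT
      simp [this]
    · have h1 : dd i (chi p S) = fun _ => 0 := by
        funext x
        rw [dd, chi_erase_update p S i x true hi, chi_erase_update p S i x false hi, sub_self]
      have : S ≠ insert i T := by rintro rfl; exact hi (Finset.mem_insert_self i T)
      rw [if_neg this, h1]
      simp [coeff, Ep]

lemma coeff_sum {p : ℝ} (hp : 0 < p) (hp' : p ≤ 1/2) (A : Finset (Finset (Fin n)))
    (c : Finset (Fin n) → ℝ) (T : Finset (Fin n)) :
    coeff p (fun x => ∑ S ∈ A, c S * chi p S x) T = if T ∈ A then c T else 0 := by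
  classical
  have : coeff p (fun x => ∑ S ∈ A, c S * chi p S x) T
      = ∑ S ∈ A, c S * coeff p (chi p S) T := by
    unfold coeff
    simp only [Finset.sum_mul]
    rw [Ep_sum]
    refine Finset.sum_congr rfl fun S _ => ?_
    rw [← Ep_smul]
    congr 1; funext x; ring
  rw [this]
  simp [coeff_chi hp hp']

lemma bessel {p : ℝ} (hp : 0 < p) (hp' : p ≤ 1/2) (f : (Fin n → Bool) → ℝ) :
    ∑ T : Finset (Fin n), coeff p f T ^ 2 ≤ Ep p (fun x => f x ^ 2) := by
  classical
  set g : (Fin n → Bool) → ℝ := fun x => ∑ S : Finset (Fin n), coeff p f S * chi p S x with hg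
  have hinner : ∀ h : (Fin n → Bool) → ℝ,
      Ep p (fun x => h x * g x) = ∑ S : Finset (Fin n), coeff p f S * coeff p h S := by
    intro h
    simp only [hg, Finset.mul_sum]
    rw [Ep_sum]
    refine Finset.sum_congr rfl fun S _ => ?_
    unfold coeff
    rw [← Ep_smul]
    congr 1; funext x; ring
  have hcg : ∀ T, coeff p g T = coeff p f T := by
    intro T
    rw [hg, coeff_sum hp hp']
    simp
  have h0 : 0 ≤ Ep p (fun x => (f x - g x) ^ 2) := by
    have := Ep_mono hp hp' (f := fun _ => 0) (g := fun x => (f x - g x) ^ 2)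
      (fun x => sq_nonneg _)
    simpa [Ep] using this
  have hexp : Ep p (fun x => (f x - g x) ^ 2)
      = Ep p (fun x => f x ^ 2) + ((-2) * Ep p (fun x => f x * g x) + Ep p (fun x => g x * g x)) := by
    rw [← Ep_smul, ← Ep_add, ← Ep_add]
    congr 1; funext x; ring
  rw [hexp, hinner, hinner] at h0
  simp only [hcg] at h0
  simp only [pow_two] at *
  linarith

lemma Ep_zero_le {p : ℝ} (hp : 0 < p) (hp' : p ≤ 1/2) (i : Fin n) (h : (Fin n → Bool) → ℝ)
    (hh : ∀ x, 0 ≤ h x) : Ep p (fun x => h (Function.update x i false)) ≤ 2 * Ep p h := by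
  rw [Ep_split p i h, ← Ep_smul]
  refine Ep_mono hp hp' fun x => ?_
  have h1 := hh (Function.update x i true)
  have h0 := hh (Function.update x i false)
  nlinarith [mul_nonneg hp.le h1, mul_nonneg (by linarith : (0:ℝ) ≤ 1 - 2 * p) h0]

lemma restrict_dd {p : ℝ} (hp : 0 < p) (hp' : p ≤ 1/2) (f : (Fin n → Bool) → ℝ) (i : Fin n)
    (J : Finset (Fin n)) (hi : i ∉ J) :
    Ep p (fun x => restrict1 J (dd i f) x ^ 2)
      ≤ 2 * (Ep p (fun x => restrict1 (insert i J) f x ^ 2)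
        + 2 * Ep p (fun x => restrict1 J f x ^ 2)) := by
  classical
  have h1 := Ep_zero_le hp hp' i (fun x => restrict1 J f x ^ 2) (fun x => sq_nonneg _)
  have h2 : Ep p (fun x => restrict1 J (dd i f) x ^ 2)
      ≤ 2 * (Ep p (fun x => restrict1 (insert i J) f x ^ 2)
        + Ep p (fun x => restrict1 J f (Function.update x i false) ^ 2)) := by
    rw [← Ep_add, ← Ep_smul]
    refine Ep_mono hp hp' fun x => ?_
    have e1 : Function.update (fun j => if j ∈ J then true else x j) i true
        = fun j => if j ∈ insert i J then true else x j := by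
      funext j
      by_cases hj : j = i
      · subst hj; simp
      · simp [Function.update_of_ne hj, hj]
    have e2 : Function.update (fun j => if j ∈ J then true else x j) i false
        = fun j => if j ∈ J then true else Function.update x i false j := by
      funext j
      by_cases hj : j = i
      · subst hj; simp [hi]
      · simp [Function.update_of_ne hj]
    simp only [restrict1, dd, e1, e2]
    nlinarith [sq_nonneg (f (fun j => if j ∈ insert i J then true else x j)
      + f (fun j => if j ∈ J then true else Function.update x i false j))]
  linarith

lemma main_bound {p : ℝ} (hp : 0 < p) (hp' : p ≤ 1/2) (S : Finset (Fin n)) :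
    ∀ f : (Fin n → Bool) → ℝ,
    ∑ T ∈ Finset.univ.filter (fun T => S ⊆ T), coeff p f T ^ 2
      ≤ (p * (1 - p)) ^ S.card * (2 ^ S.card *
        ∑ J ∈ S.powerset, 2 ^ (S.card - J.card) * Ep p (fun x => restrict1 J f x ^ 2)) := by
  classical
  have hpos : 0 < p * (1 - p) := mul_pos hp (by linarith)
  have hsq : Real.sqrt (p * (1 - p)) ^ 2 = p * (1 - p) := Real.sq_sqrt hpos.le
  induction S using Finset.induction_on with
  | empty =>
    intro f
    simpa [restrict1] using bessel hp hp' f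
  | insert i S hi ih =>
    intro f
    have step1 : ∑ T ∈ Finset.univ.filter (fun T => insert i S ⊆ T), coeff p f T ^ 2
        ≤ (p * (1 - p)) *
          ∑ T ∈ Finset.univ.filter (fun T => S ⊆ T), coeff p (dd i f) T ^ 2 := by
      have e : ∑ T ∈ Finset.univ.filter (fun T => insert i S ⊆ T), coeff p f T ^ 2
          = (p * (1 - p)) * ∑ T ∈ (Finset.univ.filter (fun T => insert i S ⊆ T)).image
            (fun T => T.erase i), coeff p (dd i f) T ^ 2 := by
        rw [Finset.sum_image, Finset.mul_sum]
        · refine Finset.sum_congr rfl fun T hT => ?_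
          have hiT : i ∈ T := (Finset.mem_filter.1 hT).2 (Finset.mem_insert_self i S)
          rw [coeff_dd hp hp' f T i hiT, mul_pow, hsq]
        · intro T hT T' hT' hTT
          have h1 : i ∈ T := (Finset.mem_filter.1 hT).2 (Finset.mem_insert_self i S)
          have h2 : i ∈ T' := (Finset.mem_filter.1 hT').2 (Finset.mem_insert_self i S)
          have hTT : T.erase i = T'.erase i := hTT
          rw [← Finset.insert_erase h1, hTT, Finset.insert_erase h2]
      rw [e]
      refine mul_le_mul_of_nonneg_left ?_ hpos.le
      refine Finset.sum_le_sum_of_subset_of_nonneg ?_ fun _ _ _ => sq_nonneg _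
      intro T hT
      obtain ⟨U, hU, rfl⟩ := Finset.mem_image.1 hT
      have hU := (Finset.mem_filter.1 hU).2
      refine Finset.mem_filter.2 ⟨Finset.mem_univ _, fun j hj => ?_⟩
      exact Finset.mem_erase.2 ⟨by rintro rfl; exact hi hj, hU (Finset.mem_insert_of_mem hj)⟩
    have step2 : ∑ J ∈ S.powerset, (2:ℝ) ^ (S.card - J.card)
          * Ep p (fun x => restrict1 J (dd i f) x ^ 2)
        ≤ 2 * ∑ J ∈ (insert i S).powerset, 2 ^ ((insert i S).card - J.card)
          * Ep p (fun x => restrict1 J f x ^ 2) := by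
      rw [Finset.sum_powerset_insert hi, ← Finset.sum_add_distrib, Finset.mul_sum]
      refine Finset.sum_le_sum fun J hJ => ?_
      have hJ := Finset.mem_powerset.1 hJ
      have hiJ : i ∉ J := fun h => hi (hJ h)
      have hc := Finset.card_le_card hJ
      rw [Finset.card_insert_of_notMem hi, Finset.card_insert_of_notMem hiJ,
        Nat.add_sub_add_right, Nat.sub_add_comm hc, pow_succ]
      have := mul_le_mul_of_nonneg_left (restrict_dd hp hp' f i J hiJ)
        (by positivity : (0:ℝ) ≤ 2 ^ (S.card - J.card))
      linarith
    calc _ ≤ _ := step1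
      _ ≤ (p * (1 - p)) * ((p * (1 - p)) ^ S.card * (2 ^ S.card *
        ∑ J ∈ S.powerset, 2 ^ (S.card - J.card)
          * Ep p (fun x => restrict1 J (dd i f) x ^ 2))) :=
          mul_le_mul_of_nonneg_left (ih _) hpos.le
      _ ≤ (p * (1 - p)) * ((p * (1 - p)) ^ S.card * (2 ^ S.card *
        (2 * ∑ J ∈ (insert i S).powerset, 2 ^ ((insert i S).card - J.card)
          * Ep p (fun x => restrict1 J f x ^ 2)))) := by gcongr
      _ = _ := by
        rw [Finset.card_insert_of_notMem hi, pow_succ, pow_succ]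
        ring

lemma num_bound (s : ℕ) : (2:ℝ) * 3 ^ s ≤ 4 ^ s + 2 ^ s := by
  induction s with
  | zero => norm_num
  | succ s ih =>
    have : (2:ℝ) ^ s ≤ 4 ^ s := by gcongr; norm_num
    rw [pow_succ, pow_succ, pow_succ]
    linarith

/-- sparse global Boolean functions have small generalised influences. -/
theorem statement4 {n : ℕ} (p δ : ℝ) (r : ℕ) (hp : 0 < p) (hp' : p ≤ 1/2)
    (hr : 1 ≤ r) (hδ : 0 < δ)
    (f : (Fin n → Bool) → ℝ) (hbool : ∀ x, f x = 0 ∨ f x = 1)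
    (hglob : IsGlobal p (r : ℝ) δ f) (hmeas : Ep p f ≤ δ) :
    ∀ S : Finset (Fin n), S.card ≤ r →
      genInf p S (trunc p r f) ≤ genInf p S f ∧ genInf p S f ≤ 8 ^ r * δ := by
  classical
  intro S hS
  have hpos : 0 < p * (1 - p) := mul_pos hp (by linarith)
  constructor
  · unfold genInf
    refine div_le_div_of_nonneg_right ?_ (by positivity)
    refine Finset.sum_le_sum fun T _ => ?_
    unfold trunc
    rw [coeff_sum hp hp']
    split_ifs
    · exact le_rfl
    · simpa using sq_nonneg (coeff p f T)
  · unfold genInf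
    rw [div_le_iff₀ (by positivity)]
    refine (main_bound hp hp' S f).trans ?_
    rw [mul_comm]
    refine mul_le_mul_of_nonneg_right ?_ (by positivity)
    have hsqf : ∀ J : Finset (Fin n), Ep p (fun x => restrict1 J f x ^ 2)
        = Ep p (restrict1 J f) := by
      intro J
      congr 1
      funext x
      rcases hbool (fun i => if i ∈ J then true else x i) with h | h <;>
        simp only [restrict1, h] <;> norm_num
    have hJ : ∀ J ∈ S.powerset, (2:ℝ) ^ (S.card - J.card) * Ep p (fun x => restrict1 J f x ^ 2)
        ≤ 2 * δ * (1 ^ J.card * 2 ^ (S.card - J.card)) - (if J = ∅ then 2 ^ S.card * δ else 0) := by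
      intro J hJ
      rw [hsqf]
      split_ifs with h0
      · subst h0
        have : Ep p (restrict1 ∅ f) ≤ δ := by
          have e : restrict1 ∅ f = f := by funext x; simp [restrict1]
          rw [e]; exact hmeas
        have := mul_le_mul_of_nonneg_left this (by positivity : (0:ℝ) ≤ 2 ^ S.card)
        simp only [Finset.card_empty, Nat.sub_zero, pow_zero]
        linarith
      · have hc : (J.card : ℝ) ≤ r := by
          exact_mod_cast (Finset.card_le_card (Finset.mem_powerset.1 hJ)).trans hS
        have : Ep p (restrict1 J f) ≤ 2 * δ := by linarith [hglob J hc]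
        have := mul_le_mul_of_nonneg_left this (by positivity : (0:ℝ) ≤ 2 ^ (S.card - J.card))
        rw [one_pow]
        linarith
    have hsum := Finset.sum_le_sum hJ
    rw [Finset.sum_sub_distrib, ← Finset.mul_sum, Finset.sum_pow_mul_eq_add_pow,
      Finset.sum_ite_eq' , if_pos (Finset.empty_mem_powerset S)] at hsum
    have h4 : (8:ℝ) ^ S.card = 2 ^ S.card * 4 ^ S.card := by rw [← mul_pow]; norm_num
    have h8 : (8:ℝ) ^ S.card ≤ 8 ^ r := pow_le_pow_right₀ (by norm_num) hS
    have h3 : 2 * δ * (1 + 2) ^ S.card - 2 ^ S.card * δ ≤ 4 ^ S.card * δ := by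
      have := mul_le_mul_of_nonneg_right (num_bound S.card) hδ.le
      norm_num
      linarith
    calc _ ≤ 2 ^ S.card * (4 ^ S.card * δ) :=
          mul_le_mul_of_nonneg_left (hsum.trans h3) (by positivity)
      _ = 8 ^ S.card * δ := by rw [h4]; ring
      _ ≤ 8 ^ r * δ := mul_le_mul_of_nonneg_right h8 hδ.le

end GlobalHC
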